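/- For the symmetric pair (g,g₀) = (gl_{n+m}, gl_m ∔ gl_n), with g₀ embedded block-diagonally and g₁ the off-diagonal blocks, the polynomials f₁,…,f_{n+m}, where f_i(M) is the sum of all principal minors of order i of the matrix M (the coefficients of the characteristic polynomial), form a good generating system: their highest g₁-degree components f₁^•,…,f_{n+m}^• are algebraically independent functions on k* = (g₀ ⋉ g₁)*. -/

import Mathlib

/-!
Everything is tested on companion matrices, i.e. matrices with an arbitrary first column, ones on
the superdiagonal and zeros elsewhere. The principal minor sum of order `k + 1` of such a matrix is
`(-1) ^ k` times the `k`-th entry of the first column (`principalMinorSum_compMat`, in a weighted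
version), so restricting `f₁, …, f_N` to the generic companion matrix gives independent coordinates.
This proves that the `f_i` are algebraically independent (`compEval_glBasicInv`).

Invariance of `f_i` holds because, over the dual numbers, `M + ε[A, M]` is the conjugate of `M` by
`1 + εA` (`glDeriv_glBasicInv`). Conversely an infinitesimal invariant `p` takes equal values at
conjugate matrices over any extension field: in characteristic zero this is checked for
transvections and for diagonal matrices, which generate (`invariant_conj`). Over the fraction field
of the polynomial ring the generic matrix is conjugate, through a cyclic basis, to its companion
matrix, whose entries are `0`, `1` and `± f_i`; hence `p` is a polynomial in the `f_i`
(`mem_adjoin_of_invariant`).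

For the highest components, reorder the standard basis so that it alternates between the two blocks
for as long as possible (`exists_reordering`). On the companion matrix in this basis, `f_k` is the
weight of the single cycle through the first `k` basis vectors, and this cycle changes block exactly
`2 * min (k / 2) (min m n)` times. No permutation of `k` indices changes block more often
(`sum_glWeight_le`), so this number is the `g₁`-degree of `f_k`, and `f_k^•` has the same
restriction to these companion matrices as `f_k`, namely a coordinate (`compEval_glTop`). Therefore
the `f_k^•` are algebraically independent too.
-/

/-!
STATEMENT 11: For the symmetric pair (g,g₀) = (gl_{n+m}, gl_m ∔ gl_n), with g₀
embedded block-diagonally (blocks of sizes m and n) and g₁ the off-diagonal blocks,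
the polynomials f₁,…,f_{n+m}, where f_i(M) is the sum of all principal minors of order
i of M (the coefficients of the characteristic polynomial), form a good generating
system: they are basic invariants of 𝕜[g]^G and their highest g₁-degree components
f₁^•,…,f_{n+m}^• are algebraically independent as functions on k* = (g₀ ⋉ g₁)*.

Conventions: 𝕜[g] = `MvPolynomial (Fin (m+n) × Fin (m+n)) 𝕜`, the variable X(i,j)
being the (i,j)-matrix entry; M is the generic matrix.  G = GL_{m+n} is connected, so
invariance = infinitesimal invariance: annihilation by the vector fields
p ↦ Σ_v ∂p/∂x_v · ([A,M])_v for all A ∈ gl_{m+n}(𝕜).  "Basic invariants" = invariant,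
algebraically independent, and generating the invariant algebra.  The g₁-degree of a
variable X(i,j) is 1 if (i,j) lies in an off-diagonal block and 0 otherwise; f^• is
the bi-homogeneous component of f of highest g₁-degree.  (Under the ℤ₂-contraction the
f_i^•, regarded as functions on k*, are the relevant K-invariants.)
-/

open MvPolynomial

noncomputable section

variable {𝕜 : Type*} [Field 𝕜] [IsAlgClosed 𝕜] [CharZero 𝕜]

/-- The generic (m+n) × (m+n) matrix. -/
def genM (N : ℕ) : Matrix (Fin N) (Fin N) (MvPolynomial (Fin N × Fin N) 𝕜) :=
  fun i j => X (i, j)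

/-- The sum of all principal minors of order k of a square matrix. -/
def principalMinorSum {N : ℕ} {R : Type*} [CommRing R]
    (k : ℕ) (A : Matrix (Fin N) (Fin N) R) : R :=
  ∑ s ∈ Finset.univ.powersetCard k,
    (A.submatrix (fun i : {x : Fin N // x ∈ s} => (i : Fin N))
      (fun j : {x : Fin N // x ∈ s} => (j : Fin N))).det

/-- The infinitesimal action of A ∈ gl_N(𝕜) on 𝕜[gl_N] (conjugation direction [A,M]). -/
def glDeriv {N : ℕ} (A : Matrix (Fin N) (Fin N) 𝕜)
    (p : MvPolynomial (Fin N × Fin N) 𝕜) : MvPolynomial (Fin N × Fin N) 𝕜 :=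
  ∑ v : Fin N × Fin N,
    pderiv v p * ((A.map C * genM N - genM N * A.map C :
      Matrix (Fin N) (Fin N) (MvPolynomial (Fin N × Fin N) 𝕜)) v.1 v.2)

/-- The g₁-degree weight for the pair (gl_{m+n}, gl_m ∔ gl_n): off-diagonal-block
entries have weight 1. -/
def glWeight (m N : ℕ) : Fin N × Fin N → ℕ :=
  fun v => if ((v.1 : ℕ) < m ∧ m ≤ (v.2 : ℕ)) ∨ ((v.2 : ℕ) < m ∧ m ≤ (v.1 : ℕ))
    then 1 else 0

/-- `f^•`: the bi-homogeneous component of highest degree with respect to g₁. -/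
def glTop (m N : ℕ) (f : MvPolynomial (Fin N × Fin N) 𝕜) :
    MvPolynomial (Fin N × Fin N) 𝕜 :=
  weightedHomogeneousComponent (glWeight m N)
    (sSup {d | weightedHomogeneousComponent (glWeight m N) d f ≠ 0}) f

/-- The coefficients of the characteristic polynomial of the generic matrix. -/
def glBasicInv (N : ℕ) (i : Fin N) : MvPolynomial (Fin N × Fin N) 𝕜 :=
  principalMinorSum ((i : ℕ) + 1) (genM N)

/-! ### Principal minor sums -/

section Minors

variable {R : Type*} [CommRing R] {N : ℕ}

lemma principalMinorSum_eq_coeff (k : ℕ) (A : Matrix (Fin N) (Fin N) R) :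
    principalMinorSum k A =
      (Matrix.det (1 + (Polynomial.X : Polynomial R) • A.map Polynomial.C)).coeff k :=
  (Matrix.coeff_det_one_add_X_smul_eq_sum_minors A k).symm

lemma principalMinorSum_map {S : Type*} [CommRing S] (φ : R →+* S) (k : ℕ)
    (A : Matrix (Fin N) (Fin N) R) :
    φ (principalMinorSum k A) = principalMinorSum k (A.map φ) := by
  simp only [principalMinorSum, map_sum, RingHom.map_det]
  rfl

lemma principalMinorSum_conj (k : ℕ) {P Q : Matrix (Fin N) (Fin N) R} (h : P * Q = 1)
    (A : Matrix (Fin N) (Fin N) R) :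
    principalMinorSum k (P * A * Q) = principalMinorSum k A := by
  rw [principalMinorSum_eq_coeff, principalMinorSum_eq_coeff]
  have h' : P.map Polynomial.C * Q.map Polynomial.C = (1 : Matrix _ _ (Polynomial R)) := by
    rw [← Matrix.map_mul, h]; simp
  have : (1 + (Polynomial.X : Polynomial R) • (P * A * Q).map Polynomial.C) =
      P.map Polynomial.C * (1 + (Polynomial.X : Polynomial R) • A.map Polynomial.C) *
        Q.map Polynomial.C := by
    rw [Matrix.mul_add, Matrix.add_mul, Matrix.mul_one, h', Matrix.map_mul, Matrix.map_mul]
    simp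
  rw [this, Matrix.det_mul, Matrix.det_mul]
  have hd : (P.map Polynomial.C).det * (Q.map Polynomial.C).det = (1 : Polynomial R) := by
    rw [← Matrix.det_mul, h', Matrix.det_one]
  rw [mul_right_comm, hd, one_mul]

lemma principalMinorSum_submatrix (k : ℕ) (e : Equiv.Perm (Fin N))
    (A : Matrix (Fin N) (Fin N) R) :
    principalMinorSum k (A.submatrix e e) = principalMinorSum k A := by
  rw [principalMinorSum_eq_coeff, principalMinorSum_eq_coeff,
    ← Matrix.det_submatrix_equiv_self e
      (1 + (Polynomial.X : Polynomial R) • A.map Polynomial.C)]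
  congr 2
  ext i j
  simp [Matrix.one_apply]

/-- The weighted companion matrix: first column `x`, superdiagonal `u`, all other entries `0`.
The entries are indexed by `ℕ` so that truncation to a smaller size is definitional. -/
def compMat (N : ℕ) (x u : ℕ → R) : Matrix (Fin N) (Fin N) R := fun a b =>
  (if (b : ℕ) = 0 then x a else 0) + (if (b : ℕ) = a + 1 then u a else 0)

/-- Expanding along the last row, only the diagonal entry and the entry in column `0` contribute;
the minor of the latter is lower triangular with diagonal `u`. -/
lemma det_one_add_compMat (x u : ℕ → R) (N : ℕ) :
    (1 + compMat N x u).det =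
      1 + ∑ k ∈ Finset.range N, (-1) ^ k * (x k * ∏ i ∈ Finset.range k, u i) := by
  induction N with
  | zero => simp
  | succ N ih =>
    rw [Matrix.det_succ_row _ (Fin.last N), Finset.sum_range_succ, ← add_assoc, ← ih]
    have hrow : ∀ j : Fin (N + 1), (1 + compMat (N + 1) x u) (Fin.last N) j =
        (if j = Fin.last N then 1 else 0) + (if j = 0 then x N else 0) := by
      intro j
      have hj : (j : ℕ) ≠ N + 1 := by omega
      simp [Matrix.one_apply, compMat, hj, eq_comm, ← Fin.val_eq_zero_iff]
    simp only [hrow, add_mul, mul_add, Finset.sum_add_distrib, ite_mul, mul_ite, zero_mul,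
      mul_zero, Finset.sum_ite_eq', Finset.mem_univ, if_true]
    congr 1
    · have : ((-1 : R)) ^ (N + N) = 1 := Even.neg_one_pow ⟨N, rfl⟩
      simp only [Fin.val_last, this, one_mul]
      congr 1
      ext i j
      simp [Matrix.one_apply, compMat, Fin.succAbove_last]
    · have hdet : ((1 + compMat (N + 1) x u).submatrix (Fin.last N).succAbove
          (0 : Fin (N + 1)).succAbove).det = ∏ i ∈ Finset.range N, u i := by
        rw [Matrix.det_of_isLowerTriangular]
        · rw [Finset.prod_range]
          refine Finset.prod_congr rfl fun i _ => ?_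
          have : i.castSucc ≠ i.succ := by simp [Fin.ext_iff]
          simp [compMat, Fin.succAbove_last, this]
        · intro i j hij
          have hij' : (i : ℕ) < j := hij
          have h1 : i.castSucc ≠ j.succ := by simp [Fin.ext_iff]; omega
          have h2 : (j : ℕ) ≠ i := by omega
          simp [compMat, Fin.succAbove_last, h1, h2]
      rw [hdet]
      simp [mul_assoc]

lemma principalMinorSum_compMat (x u : ℕ → R) {k : ℕ} (hk : k < N) :
    principalMinorSum (k + 1) (compMat N x u) =
      (-1) ^ k * (x k * ∏ i ∈ Finset.range k, u i) := by
  rw [principalMinorSum_eq_coeff]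
  have : (Polynomial.X : Polynomial R) • (compMat N x u).map Polynomial.C =
      compMat N (fun a => Polynomial.X * Polynomial.C (x a))
        (fun a => Polynomial.X * Polynomial.C (u a)) := by
    ext1 a b
    simp [compMat, mul_add, apply_ite Polynomial.C]
  rw [this, det_one_add_compMat]
  have h2 : ∀ j, (-1 : Polynomial R) ^ j * (Polynomial.X * Polynomial.C (x j) *
      ∏ i ∈ Finset.range j, Polynomial.X * Polynomial.C (u i)) =
      Polynomial.C ((-1) ^ j * (x j * ∏ i ∈ Finset.range j, u i)) * Polynomial.X ^ (j + 1) := by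
    intro j
    rw [Finset.prod_mul_distrib, Finset.prod_const, Finset.card_range]
    simp only [map_mul, map_pow, map_neg, map_one, map_prod]
    ring
  simp only [h2, Polynomial.coeff_add, Polynomial.finsetSum_coeff,
    Polynomial.coeff_C_mul_X_pow, Polynomial.coeff_one]
  simp [hk]

end Minors

/-! ### Infinitesimal invariance -/

section Invariance

variable {F : Type*} [Field F]

lemma glDeriv_add {N : ℕ} (A : Matrix (Fin N) (Fin N) F)
    (p q : MvPolynomial (Fin N × Fin N) F) :
    glDeriv A (p + q) = glDeriv A p + glDeriv A q := by
  simp [glDeriv, add_mul, Finset.sum_add_distrib]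

lemma glDeriv_mul {N : ℕ} (A : Matrix (Fin N) (Fin N) F)
    (p q : MvPolynomial (Fin N × Fin N) F) :
    glDeriv A (p * q) = p * glDeriv A q + q * glDeriv A p := by
  simp only [glDeriv, Derivation.leibniz, smul_eq_mul, Finset.mul_sum, add_mul,
    Finset.sum_add_distrib]
  congr 1 <;> exact Finset.sum_congr rfl fun _ _ => by ring

lemma glDeriv_C {N : ℕ} (A : Matrix (Fin N) (Fin N) F) (a : F) :
    glDeriv A (C a) = 0 := by
  simp [glDeriv]

lemma glDeriv_X {N : ℕ} (A : Matrix (Fin N) (Fin N) F) (v : Fin N × Fin N) :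
    glDeriv A (X v) = (A.map C * genM N - genM N * A.map C :
      Matrix (Fin N) (Fin N) (MvPolynomial (Fin N × Fin N) F)) v.1 v.2 := by
  simp [glDeriv, pderiv_X, Pi.single_apply]

/-- First-order Taylor expansion along the vector field `[A, M]`, over the dual numbers. -/
lemma aeval_dual {N : ℕ} (A : Matrix (Fin N) (Fin N) F)
    (p : MvPolynomial (Fin N × Fin N) F) :
    aeval (fun v => (TrivSqZeroExt.inl (X v) + TrivSqZeroExt.inr (glDeriv A (X v)) :
      DualNumber (MvPolynomial (Fin N × Fin N) F))) p =
      TrivSqZeroExt.inl p + TrivSqZeroExt.inr (glDeriv A p) := by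
  induction p using MvPolynomial.induction_on with
  | C a =>
    rw [glDeriv_C, aeval_C]
    simp
    rfl
  | add p q hp hq =>
    rw [map_add, hp, hq, glDeriv_add]
    ext <;> simp
  | mul_X p v hp =>
    rw [map_mul, hp, aeval_X, glDeriv_mul]
    ext <;> simp [mul_comm]

lemma glDeriv_glBasicInv {N : ℕ} (A : Matrix (Fin N) (Fin N) F) (i : Fin N) :
    glDeriv A (glBasicInv N i) = 0 := by
  have h := aeval_dual A (glBasicInv N i)
  set φ : MvPolynomial (Fin N × Fin N) F →ₐ[F] DualNumber (MvPolynomial (Fin N × Fin N) F) :=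
    aeval (fun v => (TrivSqZeroExt.inl (X v) + TrivSqZeroExt.inr (glDeriv A (X v)))) with hφ
  let ι : MvPolynomial (Fin N × Fin N) F →+* DualNumber (MvPolynomial (Fin N × Fin N) F) :=
    TrivSqZeroExt.inlHom _ _
  let E : Matrix (Fin N) (Fin N) (DualNumber (MvPolynomial (Fin N × Fin N) F)) :=
    A.map fun a => TrivSqZeroExt.inr (C a)
  have hEE : E * E = 0 := by
    ext1 a b
    simp [E, Matrix.mul_apply]
  have hEME : E * (genM N).map ι * E = 0 := by
    ext a b <;> simp [E, Matrix.mul_apply, ι, TrivSqZeroExt.fst_sum, TrivSqZeroExt.snd_sum]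
  -- to first order, `M + ε[A, M]` is the conjugate of `M` by `1 + εA`
  have hconj : (genM N).map φ = (1 + E) * (genM N).map ι * (1 - E) := by
    have : (1 + E) * (genM N).map ι * (1 - E) =
        (genM N).map ι + (E * (genM N).map ι - (genM N).map ι * E) - E * (genM N).map ι * E := by
      noncomm_ring
    rw [this, hEME, sub_zero]
    ext1 a b
    simp only [Matrix.map_apply, genM, hφ, aeval_X, glDeriv_X, Matrix.add_apply,
      Matrix.sub_apply, Matrix.mul_apply, ι, E]
    ext <;> simp [TrivSqZeroExt.fst_sum, TrivSqZeroExt.snd_sum, mul_comm]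
  have hinv : (1 + E) * (1 - E) = 1 := by
    have : (1 + E) * (1 - E) = 1 - E * E := by noncomm_ring
    rw [this, hEE, sub_zero]
  have h2 : φ (glBasicInv N i) = ι (glBasicInv N i) := by
    change φ.toRingHom (glBasicInv N i) = ι (glBasicInv N i)
    rw [glBasicInv, principalMinorSum_map, principalMinorSum_map]
    change principalMinorSum _ ((genM N).map φ) = _
    rw [hconj, principalMinorSum_conj _ hinv]
  rw [h2] at h
  have := congrArg TrivSqZeroExt.snd h
  simpa [ι] using this.symm

lemma aeval_glDeriv {N : ℕ} {S : Type*} [CommRing S] [Algebra F S]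
    (A : Matrix (Fin N) (Fin N) F) (Y : Matrix (Fin N) (Fin N) S)
    (p : MvPolynomial (Fin N × Fin N) F) :
    aeval (fun v : Fin N × Fin N => Y v.1 v.2) (glDeriv A p) =
      ∑ v : Fin N × Fin N, aeval (fun v : Fin N × Fin N => Y v.1 v.2) (pderiv v p) *
        (A.map (algebraMap F S) * Y - Y * A.map (algebraMap F S)) v.1 v.2 := by
  simp only [glDeriv, map_sum, map_mul]
  refine Finset.sum_congr rfl fun v _ => ?_
  congr 1
  simp [Matrix.mul_apply, genM]

lemma derivative_aeval {σ K : Type*} [Fintype σ] [Field K] [Algebra F K]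
    (x : σ → Polynomial K) (p : MvPolynomial σ F) :
    Polynomial.derivative (aeval x p) =
      ∑ v, aeval x (pderiv v p) * Polynomial.derivative (x v) := by
  classical
  induction p using MvPolynomial.induction_on with
  | C a =>
    rw [aeval_C, IsScalarTower.algebraMap_apply F K (Polynomial K)]
    simp
  | add p q hp hq => simp [hp, hq, add_mul, Finset.sum_add_distrib]
  | mul_X p v hp =>
    have h1 : ∀ w, aeval x (pderiv w (p * X v)) * Polynomial.derivative (x w) =
        (if w = v then aeval x p * Polynomial.derivative (x v) else 0) +
          aeval x (pderiv w p) * Polynomial.derivative (x w) * x v := by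
      intro w
      rw [Derivation.leibniz, pderiv_X, map_add, smul_eq_mul, smul_eq_mul, map_mul, map_mul,
        aeval_X]
      split_ifs with hw
      · subst hw
        rw [Pi.single_eq_same, map_one]
        ring
      · rw [Pi.single_eq_of_ne (Ne.symm hw), map_zero]
        ring
    rw [map_mul, aeval_X, Polynomial.derivative_mul, hp, Finset.sum_congr rfl fun w _ => h1 w,
      Finset.sum_add_distrib, Finset.sum_ite_eq' Finset.univ v, if_pos (Finset.mem_univ v),
      Finset.sum_mul, add_comm]

/-- The polynomial `p((1 + tE)Y(1 - tE))` in `t` has derivative `(D_E p)((1 + tE)Y(1 - tE)) = 0`,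
so it takes the same value at `t = 0` and `t = c`. -/
lemma invariant_transvection [CharZero F] {N : ℕ} {K : Type*} [Field K] [Algebra F K]
    {p : MvPolynomial (Fin N × Fin N) F}
    (hp : ∀ A : Matrix (Fin N) (Fin N) F, glDeriv A p = 0)
    {i j : Fin N} (hij : i ≠ j) (c : K) {Y Z : Matrix (Fin N) (Fin N) K}
    (h : Matrix.transvection i j c * Y = Z * Matrix.transvection i j c) :
    aeval (fun v : Fin N × Fin N => Y v.1 v.2) p =
      aeval (fun v : Fin N × Fin N => Z v.1 v.2) p := by
  have : CharZero K := charZero_of_injective_algebraMap (algebraMap F K).injective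
  let E : Matrix (Fin N) (Fin N) K := Matrix.single i j 1
  have hEE : E * E = 0 := by simp [E, Matrix.single_mul_single_of_ne, hij.symm]
  let B := E * Y - Y * E
  let D := E * Y * E
  let φ : Matrix (Fin N) (Fin N) K →+* Matrix (Fin N) (Fin N) (Polynomial K) :=
    Polynomial.C.mapMatrix
  let T : Polynomial K := Polynomial.X
  let W : Matrix (Fin N) (Fin N) (Polynomial K) := φ Y + T • φ B - T ^ 2 • φ D
  let q : Polynomial K := aeval (fun v : Fin N × Fin N => W v.1 v.2) p
  have hEB : E * B = -D := by
    simp only [B, D, Matrix.mul_sub, ← Matrix.mul_assoc, hEE, Matrix.zero_mul, zero_sub]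
  have hBE : B * E = D := by
    simp only [B, D, Matrix.sub_mul, Matrix.mul_assoc, hEE, Matrix.mul_zero, sub_zero]
  have hED : E * D = 0 := by simp only [D, ← Matrix.mul_assoc, hEE, Matrix.zero_mul]
  have hDE : D * E = 0 := by simp only [D, Matrix.mul_assoc, hEE, Matrix.mul_zero]
  have hcomm : φ E * W - W * φ E = φ B - (2 * T) • φ D := by
    simp only [W, Matrix.mul_sub, Matrix.mul_add, Matrix.sub_mul, Matrix.add_mul,
      Matrix.mul_smul, Matrix.smul_mul, ← map_mul, hEB, hBE, hED, hDE]
    simp only [B, map_sub, map_neg, map_zero]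
    module
  have hEmap : (Matrix.single i j (1 : F)).map (algebraMap F (Polynomial K)) = φ E := by
    ext1 a b
    simp [φ, E, Matrix.single_apply, apply_ite]
  have hq : Polynomial.derivative q = 0 := by
    have h0 := aeval_glDeriv (S := Polynomial K) (Matrix.single i j 1) W p
    rw [hp, map_zero, hEmap, hcomm] at h0
    rw [derivative_aeval, h0]
    refine Finset.sum_congr rfl fun v _ => ?_
    congr 1
    simp [W, T, φ, Polynomial.derivative_mul, mul_assoc]
    ring
  have hqc := Polynomial.eq_C_of_derivative_eq_zero hq
  have heval : ∀ s : K, q.eval s = aeval (fun v : Fin N × Fin N => (W v.1 v.2).eval s) p := by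
    intro s
    have := MvPolynomial.comp_aeval_apply (R := F)
      ((Polynomial.aeval s : Polynomial K →ₐ[K] K).restrictScalars F)
      (f := fun v : Fin N × Fin N => W v.1 v.2) p
    simpa [Polynomial.coe_aeval_eq_eval] using this
  have h01 : q.eval 0 = q.eval c := by rw [hqc]; simp
  rw [heval, heval] at h01
  have hY : ∀ v : Fin N × Fin N, (W v.1 v.2).eval 0 = Y v.1 v.2 := by
    intro v; simp [W, T, φ]
  have hZ : Z = Y + c • B - c ^ 2 • D := by
    have e1 : Matrix.transvection i j c = 1 + c • E := by
      simp [Matrix.transvection, E, Matrix.smul_single]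
    have e2 : (1 + c • E) * (1 - c • E) = 1 := by
      simp [Matrix.mul_sub, Matrix.add_mul, hEE]
    rw [e1] at h
    calc Z = Z * ((1 + c • E) * (1 - c • E)) := by rw [e2, Matrix.mul_one]
      _ = (1 + c • E) * Y * (1 - c • E) := by rw [← Matrix.mul_assoc, ← h]
      _ = _ := by
        simp only [Matrix.mul_sub, Matrix.add_mul, Matrix.one_mul, Matrix.mul_one,
          Matrix.smul_mul, Matrix.mul_smul, B, D]
        module
  have hZ' : ∀ v : Fin N × Fin N, (W v.1 v.2).eval c = Z v.1 v.2 := by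
    intro v; rw [hZ]; simp [W, T, φ]; ring
  simpa only [hY, hZ'] using h01

lemma coeff_glDeriv_diagonal {N : ℕ} (d : Fin N → F) (p : MvPolynomial (Fin N × Fin N) F)
    (μ : Fin N × Fin N →₀ ℕ) :
    coeff μ (glDeriv (Matrix.diagonal d) p) =
      (∑ v : Fin N × Fin N, (μ v : F) * (d v.1 - d v.2)) * coeff μ p := by
  induction p using MvPolynomial.induction_on' with
  | monomial ν a =>
    have h1 : glDeriv (Matrix.diagonal d) (monomial ν a) =
        C (∑ v : Fin N × Fin N, (ν v : F) * (d v.1 - d v.2)) * monomial ν a := by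
      rw [glDeriv, map_sum, Finset.sum_mul]
      refine Finset.sum_congr rfl fun v _ => ?_
      have h2 : ((Matrix.diagonal d).map C * genM N - genM N * (Matrix.diagonal d).map C :
          Matrix (Fin N) (Fin N) (MvPolynomial (Fin N × Fin N) F)) v.1 v.2 =
          C (d v.1 - d v.2) * X v := by
        rw [Matrix.diagonal_map (map_zero _)]
        simp [genM]
        ring
      rw [h2, mul_left_comm, mul_comm _ (X v), X_mul_pderiv_monomial]
      simp
      ring
    rw [h1, coeff_C_mul, coeff_monomial]
    split_ifs with h
    · rw [h]
    · simp
  | add p q hp hq => simp only [glDeriv_add, coeff_add, hp, hq, mul_add]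

/-- Annihilation by the diagonal matrix units forces each monomial of `p` to have, for every `i`,
equal total degree in row `i` and in column `i`; hence the torus fixes every monomial. -/
lemma invariant_diagonal [CharZero F] {N : ℕ} {K : Type*} [Field K] [Algebra F K]
    {p : MvPolynomial (Fin N × Fin N) F}
    (hp : ∀ A : Matrix (Fin N) (Fin N) F, glDeriv A p = 0)
    {d : Fin N → K} (hd : ∀ i, d i ≠ 0) {Y Z : Matrix (Fin N) (Fin N) K}
    (h : Matrix.diagonal d * Y = Z * Matrix.diagonal d) :
    aeval (fun v : Fin N × Fin N => Y v.1 v.2) p =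
      aeval (fun v : Fin N × Fin N => Z v.1 v.2) p := by
  rw [aeval_def, aeval_def, eval₂_eq', eval₂_eq']
  refine Finset.sum_congr rfl fun μ hμ => ?_
  congr 1
  have hbal : ∀ i, ∑ v : Fin N × Fin N, (if v.1 = i then μ v else 0) =
      ∑ v : Fin N × Fin N, (if v.2 = i then μ v else 0) := by
    intro i
    have h1 := coeff_glDeriv_diagonal (Pi.single i 1) p μ
    rw [hp, coeff_zero] at h1
    have h2 := (mul_eq_zero.mp h1.symm).resolve_right (mem_support_iff.mp hμ)
    simp only [mul_sub, Finset.sum_sub_distrib, Pi.single_apply, mul_ite, mul_one, mul_zero,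
      sub_eq_zero] at h2
    exact_mod_cast h2
  have key : ∀ f : Fin N × Fin N → Fin N, ∏ v, d (f v) ^ μ v =
      ∏ i, d i ^ ∑ v : Fin N × Fin N, (if f v = i then μ v else 0) := by
    intro f
    simp only [← Finset.prod_pow_eq_pow_sum]
    rw [Finset.prod_comm]
    refine Finset.prod_congr rfl fun v _ => ?_
    rw [Finset.prod_eq_single (f v)]
    · simp
    · intro b _ hb
      simp [hb.symm]
    · simp
  have hdd : ∏ v : Fin N × Fin N, d v.1 ^ μ v = ∏ v : Fin N × Fin N, d v.2 ^ μ v := by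
    rw [key Prod.fst, key Prod.snd]
    simp only [hbal]
  have hne : ∏ v : Fin N × Fin N, d v.1 ^ μ v ≠ 0 :=
    Finset.prod_ne_zero_iff.mpr fun v _ => pow_ne_zero _ (hd _)
  apply mul_left_cancel₀ hne
  conv_rhs => rw [hdd, mul_comm]
  rw [← Finset.prod_mul_distrib, ← Finset.prod_mul_distrib]
  refine Finset.prod_congr rfl fun v _ => ?_
  have hv := congrFun (congrFun h v.1) v.2
  rw [Matrix.diagonal_mul, Matrix.mul_diagonal] at hv
  rw [← mul_pow, ← mul_pow, hv]

/-- An infinitesimal invariant takes the same value at conjugate matrices over any extension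
field. -/
lemma invariant_conj [CharZero F] {N : ℕ} {K : Type*} [Field K] [Algebra F K]
    {p : MvPolynomial (Fin N × Fin N) F}
    (hp : ∀ A : Matrix (Fin N) (Fin N) F, glDeriv A p = 0)
    {P : Matrix (Fin N) (Fin N) K} (hP : P.det ≠ 0) :
    ∀ {Y Z : Matrix (Fin N) (Fin N) K}, P * Y = Z * P →
      aeval (fun v : Fin N × Fin N => Y v.1 v.2) p =
        aeval (fun v : Fin N × Fin N => Z v.1 v.2) p := by
  refine Matrix.diagonal_transvection_induction_of_det_ne_zero
    (fun P => ∀ {Y Z : Matrix (Fin N) (Fin N) K}, P * Y = Z * P →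
      aeval (fun v : Fin N × Fin N => Y v.1 v.2) p =
        aeval (fun v : Fin N × Fin N => Z v.1 v.2) p) P hP ?_ ?_ ?_
  · intro d hd Y Z h
    rw [Matrix.det_diagonal, Finset.prod_ne_zero_iff] at hd
    exact invariant_diagonal hp (fun i => hd i (Finset.mem_univ i)) h
  · rintro ⟨i, j, hij, c⟩ Y Z h
    exact invariant_transvection hp hij c h
  · intro A B _ hB hA' hB' Y Z h
    have hBu : IsUnit B.det := isUnit_iff_ne_zero.mpr hB
    refine (hB' (Z := B * Y * B⁻¹) ?_).trans (hA' ?_)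
    · rw [Matrix.nonsing_inv_mul_cancel_right _ _ hBu]
    · rw [← Matrix.mul_assoc, ← Matrix.mul_assoc, h, ← Matrix.mul_assoc,
        Matrix.mul_nonsing_inv_cancel_right _ _ hBu]

end Invariance

/-! ### The invariants are generated by the principal minor sums -/

section Generation

variable {R : Type*} [CommRing R] {N : ℕ}

/-- The matrix with columns `M^(N-1) v, …, M v, v`, where `v` is the last standard basis vector. -/
def cyclicMat (M : Matrix (Fin N) (Fin N) R) : Matrix (Fin N) (Fin N) R := fun i j =>
  ((M ^ (N - 1 - (j : ℕ))).mulVec fun a => if (a : ℕ) + 1 = N then 1 else 0) i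

lemma cayleyHamilton_minors (M : Matrix (Fin N) (Fin N) R) :
    M ^ N = ∑ a ∈ Finset.range N, ((-1) ^ a * principalMinorSum (a + 1) M) • M ^ (N - 1 - a) := by
  nontriviality R
  have h := Matrix.aeval_self_charpoly M
  rw [Polynomial.aeval_eq_sum_range, Matrix.charpoly_natDegree_eq_dim, Fintype.card_fin,
    ← Finset.sum_range_reflect, Finset.sum_range_succ'] at h
  have hc : ∀ k ≤ N, M.charpoly.coeff (N - k) = (-1) ^ k * principalMinorSum k M := by
    intro k hk
    have := Matrix.charpoly_coeff_eq_sum_minors M k (by simpa using hk)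
    rw [Fintype.card_fin] at this
    exact this
  have h0 : M.charpoly.coeff N = 1 := by
    have := M.charpoly_monic.coeff_natDegree
    rwa [Matrix.charpoly_natDegree_eq_dim, Fintype.card_fin] at this
  have h1 : ∀ a ∈ Finset.range N,
      M.charpoly.coeff (N + 1 - 1 - (a + 1)) • M ^ (N + 1 - 1 - (a + 1)) =
        -(((-1) ^ a * principalMinorSum (a + 1) M) • M ^ (N - 1 - a)) := by
    intro a ha
    have ha := Finset.mem_range.mp ha
    rw [show N + 1 - 1 - (a + 1) = N - (a + 1) by omega, hc _ (by omega),
      show N - 1 - a = N - (a + 1) by omega, ← neg_smul, pow_succ]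
    congr 1
    ring
  rw [Finset.sum_congr rfl h1, Finset.sum_neg_distrib] at h
  simp only [Nat.add_sub_cancel, Nat.sub_zero, h0, one_smul] at h
  exact (neg_add_eq_zero.mp h).symm

/-- In the cyclic basis, `M` becomes the companion matrix of its characteristic polynomial. -/
lemma cyclicMat_mul_compMat (M : Matrix (Fin N) (Fin N) R) :
    cyclicMat M * compMat N (fun a => (-1) ^ a * principalMinorSum (a + 1) M) (fun _ => 1) =
      M * cyclicMat M := by
  ext i j
  have hR : (M * cyclicMat M) i j =
      ((M ^ (N - (j : ℕ))).mulVec fun a => if (a : ℕ) + 1 = N then 1 else 0) i := by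
    have hj := j.isLt
    rw [show N - (j : ℕ) = (N - 1 - j) + 1 by omega, pow_succ', ← Matrix.mulVec_mulVec]
    rfl
  rw [hR, Matrix.mul_apply]
  by_cases hj : (j : ℕ) = 0
  · simp only [compMat, hj, if_true, (Nat.succ_ne_zero _).symm, if_false, add_zero, Nat.sub_zero]
    rw [cayleyHamilton_minors M, Matrix.sum_mulVec, Finset.sum_apply, Finset.sum_range]
    refine Finset.sum_congr rfl fun a _ => ?_
    rw [Matrix.smul_mulVec, Pi.smul_apply, smul_eq_mul, mul_comm]
    rfl
  · have hlt : (j : ℕ) - 1 < N := by omega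
    rw [Finset.sum_eq_single ⟨(j : ℕ) - 1, hlt⟩]
    · simp only [compMat, hj, if_false, zero_add]
      rw [if_pos (by omega), mul_one, cyclicMat]
      simp only
      rw [show N - 1 - ((j : ℕ) - 1) = N - j by omega]
    · intro b _ hb
      have : (j : ℕ) ≠ b + 1 := fun h => hb (Fin.ext (by simp only; omega))
      simp [compMat, hj, this]
    · simp

lemma cyclicMat_map {S : Type*} [CommRing S] (φ : R →+* S) (M : Matrix (Fin N) (Fin N) R) :
    (cyclicMat M).map φ = cyclicMat (M.map φ) := by
  ext i j
  have h := RingHom.map_mulVec φ (M ^ (N - 1 - (j : ℕ)))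
    (fun a => if (a : ℕ) + 1 = N then 1 else 0) i
  rw [Matrix.map_apply, cyclicMat, h, cyclicMat, Matrix.map_pow]
  congr 2
  ext a
  simp only [Function.comp_apply]
  split_ifs <;> simp

/-- For the nilpotent shift the cyclic basis is the standard basis. -/
lemma cyclicMat_shift : cyclicMat (compMat N (fun _ => (0 : R)) (fun _ => 1)) = 1 := by
  have h : ∀ k : ℕ, ((compMat N (fun _ => (0 : R)) (fun _ => 1)) ^ k).mulVec
      (fun a : Fin N => if (a : ℕ) + 1 = N then (1 : R) else 0) =
      fun a : Fin N => if (a : ℕ) + 1 + k = N then (1 : R) else 0 := by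
    intro k
    induction k with
    | zero => simp
    | succ k ih =>
      rw [pow_succ', ← Matrix.mulVec_mulVec, ih]
      ext i
      simp only [Matrix.mulVec, dotProduct, compMat, ite_self, zero_add, ite_mul, one_mul,
        zero_mul]
      split_ifs with hi
      · rw [Finset.sum_eq_single ⟨(i : ℕ) + 1, by omega⟩]
        · simp only [if_true]
          rw [if_pos (by omega)]
        · intro b _ hb
          rw [if_neg fun h => hb (Fin.ext h)]
        · simp
      · refine Finset.sum_eq_zero fun b _ => ?_
        split_ifs <;> first | rfl | omega
  ext i j
  rw [cyclicMat, h, Matrix.one_apply]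
  have hi := i.isLt
  have hj := j.isLt
  by_cases hij : i = j
  · rw [if_pos hij, hij]
    exact if_pos (by omega)
  · have : (i : ℕ) ≠ j := fun h => hij (Fin.ext h)
    rw [if_neg hij]
    exact if_neg (by omega)

lemma aeval_mem_of_forall_mem {σ F S : Type*} [CommRing F] [CommRing S] [Algebra F S]
    (B : Subalgebra F S) {y : σ → S} (hy : ∀ v, y v ∈ B) (p : MvPolynomial σ F) :
    aeval y p ∈ B := by
  induction p using MvPolynomial.induction_on with
  | C a => rw [aeval_C]; exact B.algebraMap_mem a
  | add p q hp hq => rw [map_add]; exact B.add_mem hp hq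
  | mul_X p v hp => rw [map_mul, aeval_X]; exact B.mul_mem hp (hy v)

lemma genM_map_aeval {F S : Type*} [Field F] [CommRing S] [Algebra F S]
    (Y : Matrix (Fin N) (Fin N) S) :
    (genM N).map (aeval (R := F) fun v : Fin N × Fin N => Y v.1 v.2) = Y := by
  ext i j
  simp [genM]

/-- Over the fraction field, the generic matrix is conjugate to its companion matrix, so an
invariant `p` equals its value at a matrix whose entries are `0`, `1` and `± f_i`. -/
lemma mem_adjoin_of_invariant {F : Type*} [Field F] [CharZero F]
    {p : MvPolynomial (Fin N × Fin N) F}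
    (hp : ∀ A : Matrix (Fin N) (Fin N) F, glDeriv A p = 0) :
    p ∈ Algebra.adjoin F (Set.range (glBasicInv (𝕜 := F) N)) := by
  let K := FractionRing (MvPolynomial (Fin N × Fin N) F)
  let ι := algebraMap (MvPolynomial (Fin N × Fin N) F) K
  let c : Matrix (Fin N) (Fin N) (MvPolynomial (Fin N × Fin N) F) :=
    compMat N (fun a => (-1) ^ a * principalMinorSum (a + 1) (genM N)) (fun _ => 1)
  have hdet : (cyclicMat (genM (𝕜 := F) N)).det ≠ 0 := by
    intro h0
    let φ : MvPolynomial (Fin N × Fin N) F →ₐ[F] F := aeval fun v : Fin N × Fin N =>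
      compMat N (fun _ => (0 : F)) (fun _ => 1) v.1 v.2
    have h1 : φ.toRingHom (cyclicMat (genM (𝕜 := F) N)).det = 1 := by
      rw [RingHom.map_det, RingHom.mapMatrix_apply, cyclicMat_map]
      have : (genM N).map φ.toRingHom = compMat N (fun _ => (0 : F)) (fun _ => 1) :=
        genM_map_aeval _
      rw [this, cyclicMat_shift, Matrix.det_one]
    rw [h0, map_zero] at h1
    exact zero_ne_one h1
  have hdetK : ((cyclicMat (genM (𝕜 := F) N)).map ι).det ≠ 0 := by
    rw [← RingHom.mapMatrix_apply, ← RingHom.map_det]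
    exact (map_ne_zero_iff ι (IsFractionRing.injective _ K)).mpr hdet
  have hrel : (cyclicMat (genM (𝕜 := F) N)).map ι * c.map ι =
      (genM N).map ι * (cyclicMat (genM N)).map ι := by
    rw [← Matrix.map_mul, ← Matrix.map_mul, cyclicMat_mul_compMat]
  have h := invariant_conj hp hdetK hrel
  have hval : ∀ Y : Matrix (Fin N) (Fin N) (MvPolynomial (Fin N × Fin N) F),
      aeval (fun v : Fin N × Fin N => (Y.map ι) v.1 v.2) p =
        ι (aeval (fun v : Fin N × Fin N => Y v.1 v.2) p) := fun Y =>
    (comp_aeval_apply (IsScalarTower.toAlgHom F (MvPolynomial (Fin N × Fin N) F) K)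
      (f := fun v : Fin N × Fin N => Y v.1 v.2) p).symm
  rw [hval, hval] at h
  have h' := IsFractionRing.injective _ K h
  have hid : aeval (fun v : Fin N × Fin N => genM (𝕜 := F) N v.1 v.2) p = p :=
    aeval_X_left_apply p
  rw [hid] at h'
  rw [← h']
  refine aeval_mem_of_forall_mem _ (fun v => ?_) p
  have hx : (-1) ^ (v.1 : ℕ) * principalMinorSum ((v.1 : ℕ) + 1) (genM N) ∈
      Algebra.adjoin F (Set.range (glBasicInv (𝕜 := F) N)) :=
    mul_mem (pow_mem (neg_mem (one_mem _)) _) (Algebra.subset_adjoin ⟨v.1, rfl⟩)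
  simp only [c, compMat]
  refine add_mem ?_ ?_ <;> split_ifs
  · exact hx
  · exact zero_mem _
  · exact one_mem _
  · exact zero_mem _

end Generation

/-! ### Components of highest degree -/

section Top

variable {F : Type*} [Field F] {N : ℕ}

/-- The first column `X₀, -X₁, X₂, …` of the generic companion matrix; the signs make the
principal minor sums equal to the coordinates. -/
def compCol (F : Type*) [Field F] (N a : ℕ) : MvPolynomial (Fin N) F :=
  if h : a < N then (-1) ^ a * X ⟨a, h⟩ else 0

/-- Restriction to the generic companion matrix with respect to the reordering `σ` of the
standard basis. -/
def compEval (F : Type*) [Field F] (σ : Equiv.Perm (Fin N)) :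
    MvPolynomial (Fin N × Fin N) F →ₐ[F] MvPolynomial (Fin N) F :=
  aeval fun v => compMat N (compCol F N) (fun _ => 1) (σ v.1) (σ v.2)

lemma neg_one_pow_mul_compCol (i : Fin N) : (-1) ^ (i : ℕ) * compCol F N i = X i := by
  rw [compCol, dif_pos i.isLt, ← mul_assoc, ← mul_pow]
  simp

lemma compEval_glBasicInv (σ : Equiv.Perm (Fin N)) (i : Fin N) :
    compEval F σ (glBasicInv N i) = X i := by
  change (compEval F σ).toRingHom (glBasicInv N i) = X i
  rw [glBasicInv, principalMinorSum_map]
  have : (genM N).map (compEval F σ).toRingHom =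
      (compMat N (compCol F N) (fun _ => 1)).submatrix σ σ :=
    genM_map_aeval ((compMat N (compCol F N) (fun _ => 1)).submatrix σ σ)
  rw [this, principalMinorSum_submatrix, principalMinorSum_compMat _ _ i.isLt]
  simp [neg_one_pow_mul_compCol]

lemma coeff_aeval_weighted {τ S : Type*} [CommRing S] [Algebra F S] (w : τ → ℕ)
    (y : τ → S) (p : MvPolynomial τ F) (d : ℕ) :
    (aeval (fun v => Polynomial.X ^ w v * Polynomial.C (y v) : τ → Polynomial S) p).coeff d =
      aeval y (weightedHomogeneousComponent w d p) := by
  classical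
  induction p using MvPolynomial.induction_on' with
  | monomial μ a =>
    have h1 : aeval (fun v => Polynomial.X ^ w v * Polynomial.C (y v) : τ → Polynomial S)
        (monomial μ a) =
        Polynomial.C (aeval y (monomial μ a)) * Polynomial.X ^ Finsupp.weight w μ := by
      rw [aeval_monomial, aeval_monomial, IsScalarTower.algebraMap_apply F S (Polynomial S),
        Finsupp.weight_apply]
      simp only [Finsupp.prod, Finsupp.sum, mul_pow, Finset.prod_mul_distrib, ← pow_mul,
        Finset.prod_pow_eq_pow_sum, map_mul, map_prod, map_pow, smul_eq_mul, mul_comm (μ _)]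
      rw [mul_assoc, mul_comm (Polynomial.X ^ _)]
      rfl
    have h2 : (monomial μ a : MvPolynomial τ F) ∈
        weightedHomogeneousSubmodule F w (Finsupp.weight w μ) :=
      isWeightedHomogeneous_monomial w μ a rfl
    rw [h1, Polynomial.coeff_C_mul_X_pow, weightedHomogeneousComponent_of_mem h2]
    split_ifs with h
    · rfl
    · simp
  | add p q hp hq => rw [map_add, map_add, map_add, Polynomial.coeff_add, hp, hq]

/-- The block pattern of the reordered basis: the first `2r` vectors alternate between the larger
and the smaller block, the remaining ones lie in the larger block. The value is `1` if the vectors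
at positions `a` and `b` lie in different blocks. -/
def altWeight (r a b : ℕ) : ℕ :=
  if (a < 2 * r ∧ a % 2 = 1) ↔ (b < 2 * r ∧ b % 2 = 1) then 0 else 1

/-- The number of block changes along the cycle `0 → 1 → ⋯ → k → 0`. -/
lemma altWeight_cycle (r k : ℕ) :
    altWeight r k 0 + ∑ i ∈ Finset.range k, altWeight r i (i + 1) = 2 * min ((k + 1) / 2) r := by
  have h : ∀ k, ∑ i ∈ Finset.range k, altWeight r i (i + 1) = min k (2 * r) := by
    intro k
    induction k with
    | zero => simp
    | succ k ih =>
      rw [Finset.sum_range_succ, ih, altWeight]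
      split_ifs <;> omega
  rw [h, altWeight]
  by_cases h1 : k < 2 * r <;> by_cases h2 : k % 2 = 1 <;> simp [h1, h2] <;> omega

lemma exists_reordering (m n : ℕ) : ∃ τ : Equiv.Perm (Fin (m + n)), ∀ a b,
    glWeight m (m + n) (τ a, τ b) = altWeight (min m n) a b := by
  let f : ℕ → ℕ := fun a =>
    if n ≤ m then
      (if a < 2 * n then (if a % 2 = 1 then m + a / 2 else a / 2) else a - n)
    else
      (if a < 2 * m then (if a % 2 = 1 then a / 2 else m + a / 2) else a)
  have hlt : ∀ a, a < m + n → f a < m + n := by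
    intro a ha
    simp only [f]
    split_ifs <;> omega
  let g : Fin (m + n) → Fin (m + n) := fun a => ⟨f a, hlt a a.isLt⟩
  have hg : Function.Injective g := by
    intro a b hab
    have h : f a = f b := congrArg Fin.val hab
    apply Fin.ext
    have ha := a.isLt
    have hb := b.isLt
    simp only [f] at h
    split_ifs at h <;> omega
  refine ⟨Equiv.ofBijective g (Finite.injective_iff_bijective.mp hg), fun a b => ?_⟩
  have ha := a.isLt
  have hb := b.isLt
  -- position `a` lies in the smaller block exactly when it is odd and below `2 * min m n`
  have hblk : ∀ a, a < m + n → (f a < m ↔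
      (n ≤ m ↔ ¬ (a < 2 * min m n ∧ a % 2 = 1))) := by
    intro a ha
    simp only [f]
    split_ifs <;> omega
  have h1 := hblk a ha
  have h2 := hblk b hb
  simp only [glWeight, altWeight, Equiv.ofBijective_apply, g]
  have e1 : m ≤ f a ↔ ¬ f a < m := not_lt.symm
  have e2 : m ≤ f b ↔ ¬ f b < m := not_lt.symm
  simp only [e1, e2]
  by_cases h : n ≤ m <;> simp only [h1, h2, h, true_iff, false_iff] <;>
    by_cases h3 : ((a : ℕ) < 2 * min m n ∧ (a : ℕ) % 2 = 1) <;>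
    by_cases h4 : ((b : ℕ) < 2 * min m n ∧ (b : ℕ) % 2 = 1) <;> simp [h3, h4]

lemma compEval_component {m n : ℕ} {τ : Equiv.Perm (Fin (m + n))}
    (hτ : ∀ a b, glWeight m (m + n) (τ a, τ b) = altWeight (min m n) a b)
    (i : Fin (m + n)) :
    compEval F τ.symm (weightedHomogeneousComponent (glWeight m (m + n))
      (2 * min (((i : ℕ) + 1) / 2) (min m n)) (glBasicInv (m + n) i)) = X i := by
  let r := min m n
  rw [compEval, ← coeff_aeval_weighted]
  set ψ : MvPolynomial (Fin (m + n) × Fin (m + n)) F →ₐ[F]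
      Polynomial (MvPolynomial (Fin (m + n)) F) := aeval _ with hψ
  have hmat : (genM (m + n)).map ψ.toRingHom = (compMat (m + n)
      (fun a => Polynomial.X ^ altWeight r a 0 * Polynomial.C (compCol F (m + n) a))
      (fun a => Polynomial.X ^ altWeight r a (a + 1))).submatrix τ.symm τ.symm := by
    ext1 a b
    have hw := hτ (τ.symm a) (τ.symm b)
    simp only [Equiv.apply_symm_apply] at hw
    change ψ (X (a, b)) = _
    rw [hψ, aeval_X, hw, Matrix.submatrix_apply]
    simp only [compMat]
    split_ifs with h1 h2 h2
    · omega
    · simp [h1, r]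
    · simp [h2, r]
    · simp
  have hval : ψ (glBasicInv (m + n) i) =
      Polynomial.C (X i) * Polynomial.X ^ (2 * min (((i : ℕ) + 1) / 2) r) := by
    change ψ.toRingHom (glBasicInv (m + n) i) = _
    rw [glBasicInv, principalMinorSum_map, hmat, principalMinorSum_submatrix,
      principalMinorSum_compMat _ _ i.isLt, Finset.prod_pow_eq_pow_sum, ← altWeight_cycle r i,
      ← neg_one_pow_mul_compCol, map_mul, map_pow, map_neg, map_one, pow_add]
    ring
  rw [hval, Polynomial.coeff_C_mul_X_pow, if_pos rfl]

/-- A permutation of a `k`-element index set changes block at most `2 * min (k / 2) (min m n)`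
times: each change uses an index of either block, as source or as target. -/
lemma sum_glWeight_le {m n k : ℕ} {s : Finset (Fin (m + n))} (hs : s.card = k)
    (π : Equiv.Perm s) :
    ∑ i : s, glWeight m (m + n) ((π i : Fin (m + n)), (i : Fin (m + n))) ≤
      2 * min (k / 2) (min m n) := by
  let χ : Fin (m + n) → ℕ := fun i => if (i : ℕ) < m then 1 else 0
  let η : Fin (m + n) → ℕ := fun i => if (i : ℕ) < m then 0 else 1
  have h1 : ∑ i : s, glWeight m (m + n) ((π i : Fin (m + n)), (i : Fin (m + n))) ≤
      ∑ i : s, χ (π i) + ∑ i : s, χ i := by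
    rw [← Finset.sum_add_distrib]
    refine Finset.sum_le_sum fun i _ => ?_
    simp only [glWeight, χ]
    split_ifs <;> omega
  have h2 : ∑ i : s, glWeight m (m + n) ((π i : Fin (m + n)), (i : Fin (m + n))) ≤
      ∑ i : s, η (π i) + ∑ i : s, η i := by
    rw [← Finset.sum_add_distrib]
    refine Finset.sum_le_sum fun i _ => ?_
    simp only [glWeight, η]
    split_ifs <;> omega
  rw [Equiv.sum_comp π (fun i : s => χ i)] at h1
  rw [Equiv.sum_comp π (fun i : s => η i)] at h2
  have h3 : ∑ i : s, χ i + ∑ i : s, η i = k := by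
    rw [← Finset.sum_add_distrib, ← hs]
    have : ∀ i : s, χ i + η i = 1 := fun i => by simp only [χ, η]; split_ifs <;> rfl
    simp [this]
  have h4 : ∑ i : s, χ i ≤ m := by
    rw [Finset.sum_coe_sort s χ]
    refine (Finset.sum_le_univ_sum_of_nonneg fun _ => Nat.zero_le _).trans ?_
    simp only [χ]
    rw [Fin.sum_univ_add]
    simp
  have h5 : ∑ i : s, η i ≤ n := by
    rw [Finset.sum_coe_sort s η]
    refine (Finset.sum_le_univ_sum_of_nonneg fun _ => Nat.zero_le _).trans ?_
    simp [η, Fin.sum_univ_add]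
  omega

lemma component_eq_zero_of_lt {m n : ℕ} (i : Fin (m + n)) {d : ℕ}
    (hd : 2 * min (((i : ℕ) + 1) / 2) (min m n) < d) :
    weightedHomogeneousComponent (glWeight m (m + n)) d
      (glBasicInv (𝕜 := F) (m + n) i) = 0 := by
  rw [glBasicInv, principalMinorSum, map_sum]
  refine Finset.sum_eq_zero fun s hs => ?_
  rw [Matrix.det_apply, map_sum]
  refine Finset.sum_eq_zero fun π _ => ?_
  have hhom : IsWeightedHomogeneous (glWeight m (m + n))
      (∏ j : s, (X ((π j : Fin (m + n)), (j : Fin (m + n))) :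
        MvPolynomial (Fin (m + n) × Fin (m + n)) F))
      (∑ j : s, glWeight m (m + n) ((π j : Fin (m + n)), (j : Fin (m + n)))) :=
    IsWeightedHomogeneous.prod _ _ _ fun j _ => isWeightedHomogeneous_X _ _ _
  have hle := sum_glWeight_le (Finset.mem_powersetCard.mp hs).2 π
  have hz := hhom.weightedHomogeneousComponent_ne d (by omega)
  rw [Units.smul_def, map_zsmul]
  exact (congrArg _ hz).trans (smul_zero _)

lemma compEval_glTop {m n : ℕ} {τ : Equiv.Perm (Fin (m + n))}
    (hτ : ∀ a b, glWeight m (m + n) (τ a, τ b) = altWeight (min m n) a b)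
    (i : Fin (m + n)) :
    compEval F τ.symm (glTop m (m + n) (glBasicInv (m + n) i)) = X i := by
  have hsup : sSup {d | weightedHomogeneousComponent (glWeight m (m + n)) d
      (glBasicInv (𝕜 := F) (m + n) i) ≠ 0} = 2 * min (((i : ℕ) + 1) / 2) (min m n) := by
    refine IsGreatest.csSup_eq ⟨fun h0 => ?_, fun d hd => ?_⟩
    · have h := compEval_component (F := F) hτ i
      rw [h0, map_zero] at h
      exact X_ne_zero i h.symm
    · by_contra hlt
      exact hd (component_eq_zero_of_lt i (not_le.mp hlt))
  rw [glTop, hsup, compEval_component hτ]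

end Top

theorem gl_good_generating_system (m n : ℕ) :
    -- the f_i are basic invariants of 𝕜[gl_{m+n}]^{GL_{m+n}} :
    (∀ (A : Matrix (Fin (m + n)) (Fin (m + n)) 𝕜) (i : Fin (m + n)),
        glDeriv A (glBasicInv (m + n) i) = 0) ∧
    AlgebraicIndependent 𝕜 (glBasicInv (𝕜 := 𝕜) (m + n)) ∧
    (∀ p : MvPolynomial (Fin (m + n) × Fin (m + n)) 𝕜,
        (∀ A : Matrix (Fin (m + n)) (Fin (m + n)) 𝕜, glDeriv A p = 0) →
        p ∈ Algebra.adjoin 𝕜 (Set.range (glBasicInv (𝕜 := 𝕜) (m + n)))) ∧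
    -- and they form a good generating system: the f_i^• are algebraically independent:
    AlgebraicIndependent 𝕜 (fun i : Fin (m + n) =>
      glTop m (m + n) (glBasicInv (𝕜 := 𝕜) (m + n) i)) := by
  obtain ⟨τ, hτ⟩ := exists_reordering m n
  refine ⟨fun A i => glDeriv_glBasicInv A i, ?_, fun p hp => mem_adjoin_of_invariant hp, ?_⟩
  · refine AlgebraicIndependent.of_comp (compEval 𝕜 (1 : Equiv.Perm (Fin (m + n)))) ?_
    have h : compEval 𝕜 (1 : Equiv.Perm (Fin (m + n))) ∘ glBasicInv (𝕜 := 𝕜) (m + n) = X := by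
      ext1 i
      rw [Function.comp_apply, compEval_glBasicInv]
    rw [h]
    exact MvPolynomial.algebraicIndependent_X _ _
  · refine AlgebraicIndependent.of_comp (compEval 𝕜 τ.symm) ?_
    have h : compEval 𝕜 τ.symm ∘ (fun i => glTop m (m + n) (glBasicInv (𝕜 := 𝕜) (m + n) i)) =
        X := by
      ext1 i
      rw [Function.comp_apply, compEval_glTop hτ]
    rw [h]
    exact MvPolynomial.algebraicIndependent_X _ _

end
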